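/- For any three points z₁, z₂, z₃ in the hyperbolic plane, the determinant of the 3×3 matrix with entries cosh(d_ij), where d_ij is the hyperbolic distance between z_i and z_j, is ≥ 0. (This is the hyperbolic Cayley–Menger determinant Δ_κ for m = 3 points, which is 0 or has sign sgn(κ)^{m+1} = (−1)⁴ = +1.) -/

import Mathlib

/-!
The hyperbolic plane embeds in Minkowski space `ℝ^{1,2}` as one sheet of the hyperboloid
`t² - x² - s² = 1`, and there the Minkowski product of two points is the hyperbolic cosine of their
distance. The matrix of the `cosh d_ij` is therefore the Gram matrix of three vectors for a form of
determinant `(-1)² = 1`, and its determinant is the square of the determinant of their coordinates.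
-/

open Matrix

/-- The Gram matrix of the Minkowski form of signature `(1, 2)` on `ℝ³`, with the time coordinate
first; the sign is chosen so that timelike vectors have positive square. -/
def minkowskiMatrix : Matrix (Fin 3) (Fin 3) ℝ :=
  diagonal ![1, -1, -1]

/-- The point of the hyperboloid model corresponding to a point of the upper half-plane, in
coordinates in which the lightlike vector `(1, 0, 1)` represents the boundary point `∞`. -/
noncomputable def hyperboloidPoint (z : UpperHalfPlane) : Fin 3 → ℝ :=
  ![(z.re ^ 2 + z.im ^ 2 + 1) / (2 * z.im), z.re / z.im, (z.re ^ 2 + z.im ^ 2 - 1) / (2 * z.im)]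

/-- The matrix whose rows are the hyperboloid coordinates of a family of points. -/
noncomputable def hyperboloidMatrix {ι : Type*} (z : ι → UpperHalfPlane) : Matrix ι (Fin 3) ℝ :=
  of fun i => hyperboloidPoint (z i)

theorem det_minkowskiMatrix : minkowskiMatrix.det = 1 := by
  simp [minkowskiMatrix, Fin.prod_univ_three]

theorem cosh_dist_eq_minkowski_hyperboloidPoint (z w : UpperHalfPlane) :
    Real.cosh (dist z w) = hyperboloidPoint z ᵥ* minkowskiMatrix ⬝ᵥ hyperboloidPoint w := by
  have hz := z.im_ne_zero
  have hw := w.im_ne_zero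
  simp only [UpperHalfPlane.cosh_dist', minkowskiMatrix, hyperboloidPoint, dotProduct,
    vecMul_diagonal, Fin.sum_univ_three, cons_val]
  field_simp
  ring

theorem cosh_dist_matrix_eq_gram {ι : Type*} (z : ι → UpperHalfPlane) :
    (of fun i j => Real.cosh (dist (z i) (z j))) =
      hyperboloidMatrix z * minkowskiMatrix * (hyperboloidMatrix z)ᵀ := by
  ext i j
  exact cosh_dist_eq_minkowski_hyperboloidPoint (z i) (z j)

theorem det_cosh_dist_eq_sq (z : Fin 3 → UpperHalfPlane) :
    (of fun i j => Real.cosh (dist (z i) (z j))).det = (hyperboloidMatrix z).det ^ 2 := by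
  rw [cosh_dist_matrix_eq_gram, det_mul, det_mul, det_transpose, det_minkowskiMatrix, mul_one, sq]

/-- The hyperbolic Cayley–Menger determinant of three points in the hyperbolic plane
(entries cosh(d_ij)) is nonnegative: it is 0 or has sign sgn(κ)^(m+1) = (−1)⁴ = +1. -/
theorem hyperbolic_cayley_menger_three_points (z₁ z₂ z₃ : UpperHalfPlane) :
    0 ≤ (Matrix.of fun i j : Fin 3 =>
      Real.cosh (dist (![z₁, z₂, z₃] i) (![z₁, z₂, z₃] j))).det := by
  rw [det_cosh_dist_eq_sq]
  exact sq_nonneg _
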